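/- arXiv:2106.12697 — 3 statements merged into one kernel-verified Lean document; each statement's English description precedes it below -/
import Mathlib

section
/- Let C be a commutative Noetherian ring with Krull dimension D < ∞, A = C[x_1,…,x_n], and r ≥ max(3, D+2). Then for every column b ∈ IUm_{2r+1}(A) there exists a column b′ ∈ EO(2r+1,A)^{≤ 12r−8} · b such that its entry b′_{−2} is lexicographically monic. -/
open Matrix

section OddDefs

variable {R : Type*} [CommRing R]

/-- Position of the middle basis vector `e_0` in the basis
`e_1,…,e_r,e_0,e_{-r},…,e_{-1}` of `R^{2r+1}`. -/
def midO (r : ℕ) : Fin (2 * r + 1) := ⟨r, by omega⟩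

/-- Position of `e_{-i}` given the position of `e_i` (odd case); fixes the middle position. -/
def negO (r : ℕ) (i : Fin (2 * r + 1)) : Fin (2 * r + 1) := ⟨2 * r - i.val, by omega⟩

/-- The split quadratic form `q(x) = x_0^2 + ∑_{i=1}^r x_i x_{-i}` on `R^{2r+1}`. -/
def quadO (r : ℕ) (x : Fin (2 * r + 1) → R) : R :=
  x (midO r) * x (midO r) + ∑ i : Fin r, x ⟨i.val, by omega⟩ * x ⟨2 * r - i.val, by omega⟩

/-- The odd split orthogonal group `O(2r+1,R)`, as a set of matrices. -/
def OO (r : ℕ) (R : Type*) [CommRing R] : Set (Matrix (Fin (2 * r + 1)) (Fin (2 * r + 1)) R) :=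
  {g | IsUnit g ∧ ∀ x : Fin (2 * r + 1) → R, quadO r (g.mulVec x) = quadO r x}

/-- Long root elementary transvection `T_{i,j}(ξ) = e + ξ e_{i,j} - ξ e_{-j,-i}` (odd case). -/
def TOlong (r : ℕ) (i j : Fin (2 * r + 1)) (ξ : R) :
    Matrix (Fin (2 * r + 1)) (Fin (2 * r + 1)) R :=
  1 + ξ • Matrix.single i j 1 - ξ • Matrix.single (negO r j) (negO r i) 1

/-- Short root elementary transvection
`T_{i,0}(ξ) = e + 2ξ e_{i,0} - ξ e_{0,-i} - ξ² e_{i,-i}`. -/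
def TOshort (r : ℕ) (i : Fin (2 * r + 1)) (ξ : R) :
    Matrix (Fin (2 * r + 1)) (Fin (2 * r + 1)) R :=
  1 + (2 * ξ) • Matrix.single i (midO r) 1
    - ξ • Matrix.single (midO r) (negO r i) 1
    - (ξ * ξ) • Matrix.single i (negO r i) 1

/-- Being an elementary orthogonal transvection (odd case). -/
def IsElemO (r : ℕ) (g : Matrix (Fin (2 * r + 1)) (Fin (2 * r + 1)) R) : Prop :=
  (∃ i j : Fin (2 * r + 1), ∃ ξ : R, i ≠ midO r ∧ j ≠ midO r ∧ i ≠ j ∧ i ≠ negO r j ∧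
      g = TOlong r i j ξ) ∨
  (∃ i : Fin (2 * r + 1), ∃ ξ : R, i ≠ midO r ∧ g = TOshort r i ξ)

/-- `EO(2r+1,R)^{≤N}` : products of at most `N` elementary orthogonal transvections. -/
def EOO (r N : ℕ) (R : Type*) [CommRing R] :
    Set (Matrix (Fin (2 * r + 1)) (Fin (2 * r + 1)) R) :=
  {g | ∃ L : List (Matrix (Fin (2 * r + 1)) (Fin (2 * r + 1)) R),
    L.length ≤ N ∧ (∀ m ∈ L, IsElemO r m) ∧ g = L.prod}

/-- `IUm_{2r+1}(R)` : columns `b` with `q(b) = 0` such that the row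
`(b_1,…,b_r,2b_0,b_{-r},…,b_{-1})` is unimodular. -/
def IUmO (r : ℕ) (R : Type*) [CommRing R] : Set (Fin (2 * r + 1) → R) :=
  {b | Ideal.span (Set.range fun i => if i = midO r then 2 * b i else b i) = ⊤ ∧ quadO r b = 0}

end OddDefs
/-- A multivariate polynomial is lexicographically monic if the coefficient at the
lexicographically largest occurring monomial equals `1` (variables with smaller index
are more significant). -/
def LexMonic {C : Type*} [CommRing C] {n : ℕ} (f : MvPolynomial (Fin n) C) : Prop :=
  ∃ d : Fin n →₀ ℕ, f.coeff d = 1 ∧ ∀ e : Fin n →₀ ℕ, toLex d < toLex e → f.coeff e = 0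


open Polynomial in
theorem aux_height_domain {R : Type*} [CommRing R] [IsDomain R] (Q : Ideal R[X]) [Q.IsPrime]
    (h : Q.comap Polynomial.C = ⊥) : Q.height ≤ 1 := by
  let K := FractionRing R
  let := Polynomial.algebra R K
  have : IsLocalization (Submonoid.map Polynomial.C (nonZeroDivisors R)) K[X] :=
    Polynomial.isLocalization (nonZeroDivisors R) K
  have hd : Disjoint ((Submonoid.map Polynomial.C (nonZeroDivisors R) : Submonoid R[X]) : Set R[X])
      (Q : Set R[X]) := by
    refine Set.disjoint_left.mpr ?_
    rintro a ⟨b, hb, rfl⟩ ha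
    have : b ∈ Q.comap Polynomial.C := ha
    rw [h] at this
    exact nonZeroDivisors.ne_zero hb (by simpa using this)
  rw [← IsLocalization.height_map_of_disjoint (S := K[X])
    (Submonoid.map Polynomial.C (nonZeroDivisors R)) Q hd]
  have := IsLocalization.isPrime_of_isPrime_disjoint
    (Submonoid.map Polynomial.C (nonZeroDivisors R)) K[X] Q inferInstance hd
  have := Ideal.height_le_ringKrullDim_of_isPrime (I := Q.map (algebraMap R[X] K[X]))
  rw [Polynomial.ringKrullDim_of_isNoetherianRing, ringKrullDim_eq_zero_of_field, zero_add] at this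
  exact_mod_cast this

open Polynomial in
theorem aux_height_poly {R : Type*} [CommRing R] [IsNoetherianRing R] (p : Ideal R) [p.IsPrime]
    (P : Ideal R[X]) [P.IsPrime] [hl : P.LiesOver p] :
    P.height ≤ p.height + 1 ∧ (P ≤ p.map Polynomial.C → P.height ≤ p.height) := by
  have h0 := Ideal.height_le_height_add_of_liesOver p P
  have hle : p.map (algebraMap R R[X]) ≤ P := Ideal.map_le_iff_le_comap.2 (hl.over).le
  constructor
  · refine h0.trans ?_
    gcongr
    let e : (R[X] ⧸ (p.map (algebraMap R R[X]))) ≃+* (R ⧸ p)[X] :=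
      (Ideal.polynomialQuotientEquivQuotientPolynomial p).symm
    rw [← e.height_map]
    have : (P.map (Ideal.Quotient.mk (p.map (algebraMap R R[X])))).IsPrime :=
      Ideal.map_isPrime_of_surjective Ideal.Quotient.mk_surjective (by rwa [Ideal.mk_ker])
    have := Ideal.map_isPrime_of_equiv e
      (I := (P.map (Ideal.Quotient.mk (p.map (algebraMap R R[X])))))
    apply aux_height_domain
    rw [eq_bot_iff]
    intro x hx
    obtain ⟨x, rfl⟩ := Ideal.Quotient.mk_surjective x
    have h1 : Polynomial.C (Ideal.Quotient.mk p x) =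
        e (Ideal.Quotient.mk _ (Polynomial.C x)) := by
      simp only [e]
      rw [RingEquiv.eq_symm_apply]
      have := Ideal.polynomialQuotientEquivQuotientPolynomial_map_mk p (Polynomial.C x)
      simpa using this
    rw [Ideal.mem_comap, h1] at hx
    have h2 := (Ideal.mem_map_of_equiv e _).1 hx
    obtain ⟨y, hy, hye⟩ := h2
    have h3 := e.injective hye
    subst h3
    rw [Ideal.mem_map_iff_of_surjective _ Ideal.Quotient.mk_surjective] at hy
    obtain ⟨z, hz, hzx⟩ := hy
    rw [Ideal.Quotient.eq] at hzx
    have : Polynomial.C x ∈ P := by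
      have := P.sub_mem hz (hle hzx)
      simpa using this
    have : x ∈ p := by rw [hl.over]; exact this
    simpa [Ideal.Quotient.eq_zero_iff_mem] using this
  · intro h
    have hb : P.map (Ideal.Quotient.mk (p.map (algebraMap R R[X]))) = ⊥ := by
      rw [Ideal.map_eq_bot_iff_le_ker, Ideal.mk_ker]; exact h
    have : (p.map (algebraMap R R[X])).IsPrime := by
      have : p.map (algebraMap R R[X]) = P := le_antisymm hle h
      rw [this]; infer_instance
    rw [hb, Ideal.height_bot, add_zero] at h0
    exact h0

theorem aux_avoid {A : Type*} [CommRing A] (a c : A) (k : ℕ) : ∀ T : Finset (Ideal A),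
    T.card = k → (∀ P ∈ T, P.IsPrime) → (∀ P ∈ T, c ∉ P) → ∃ l : A, ∀ P ∈ T, a + l * c ∉ P := by
  classical
  induction k with
  | zero =>
    intro T hT _ _
    rw [Finset.card_eq_zero] at hT
    subst hT
    exact ⟨0, by simp⟩
  | succ k ih =>
    intro T hT hp hc
    obtain ⟨Q, hQ⟩ := T.exists_minimal (Finset.card_pos.1 (by omega))
    have hQT := hQ.1
    obtain ⟨l, hl⟩ := ih (T.erase Q) (by rw [Finset.card_erase_of_mem hQT]; omega)
      (fun P h => hp P (Finset.mem_of_mem_erase h)) (fun P h => hc P (Finset.mem_of_mem_erase h))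
    by_cases hq : a + l * c ∈ Q
    · have hn : ¬ (T.erase Q).inf id ≤ Q := by
        rw [(hp Q hQT).inf_le']
        rintro ⟨P, hP, hPQ⟩
        exact (Finset.ne_of_mem_erase hP)
          (le_antisymm hPQ (hQ.2 (Finset.mem_of_mem_erase hP) hPQ))
      obtain ⟨m, hm, hmQ⟩ := SetLike.not_le_iff_exists.1 hn
      refine ⟨l + m, fun P hP => ?_⟩
      by_cases hPQ : P = Q
      · subst hPQ
        intro h
        have : m * c ∈ P := by
          have h5 := P.sub_mem h hq
          rwa [show a + (l + m) * c - (a + l * c) = m * c by ring] at h5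
        rcases (hp P hP).mem_or_mem this with h | h
        · exact hmQ h
        · exact hc P hP h
      · intro h
        have hP' : P ∈ T.erase Q := Finset.mem_erase.2 ⟨hPQ, hP⟩
        have hmP : m ∈ P := (Finset.inf_le (f := id) hP') hm
        apply hl P hP'
        have h5 := P.sub_mem h (P.mul_mem_right c hmP)
        rwa [show a + (l + m) * c - m * c = a + l * c by ring] at h5
    · refine ⟨l, fun P hP => ?_⟩
      by_cases hPQ : P = Q
      · rwa [hPQ]
      · exact hl P (Finset.mem_erase.2 ⟨hPQ, hP⟩)

/-- Eisenbud–Evans / absolute stable range. -/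
theorem aux_asr {A : Type*} [CommRing A] [IsNoetherianRing A] {ι : Type*} [DecidableEq ι]
    (a : ι → A) (c : A) (J : Finset ι) : ∃ l : ι → A, ∀ P : Ideal A, P.IsPrime →
      (∀ j ∈ J, a j + l j * c ∈ P) → c ∈ P ∨ (J.card : ℕ∞) ≤ P.height := by
  induction J using Finset.induction_on with
  | empty => exact ⟨0, fun P _ _ => Or.inr (by simp)⟩
  | insert i J hi ih =>
    obtain ⟨l, hl⟩ := ih
    let I : Ideal A := Ideal.span ((fun j => a j + l j * c) '' (J : Set ι))
    have hfin : {P ∈ I.minimalPrimes | c ∉ P}.Finite :=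
      (Ideal.finite_minimalPrimes_of_isNoetherianRing A I).subset (fun _ h => h.1)
    obtain ⟨t, ht⟩ := aux_avoid (a i) c _ hfin.toFinset rfl
      (fun P hP => by
        rw [Set.Finite.mem_toFinset] at hP
        exact hP.1.1.1)
      (fun P hP => by
        rw [Set.Finite.mem_toFinset] at hP
        exact hP.2)
    refine ⟨Function.update l i t, fun P hP h => ?_⟩
    by_cases hc : c ∈ P
    · exact Or.inl hc
    right
    have hJ : ∀ j ∈ J, a j + l j * c ∈ P := by
      intro j hj
      have := h j (Finset.mem_insert_of_mem hj)
      rwa [Function.update_of_ne (by rintro rfl; exact hi hj)] at this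
    have hI : I ≤ P := by
      rw [Ideal.span_le]
      rintro _ ⟨j, hj, rfl⟩
      exact hJ j hj
    obtain ⟨Q, hQ, hQP⟩ := Ideal.exists_minimalPrimes_le hI
    have : Q.IsPrime := hQ.1.1
    have hcQ : c ∉ Q := fun h => hc (hQP h)
    have h1 := ht Q (by rw [Set.Finite.mem_toFinset]; exact ⟨hQ, hcQ⟩)
    have h2 := h i (Finset.mem_insert_self _ _)
    rw [Function.update_self] at h2
    have hlt : Q < P := lt_of_le_of_ne hQP (fun e => h1 (e ▸ h2))
    have h3 := (hl Q inferInstance (fun j hj => hQ.1.2 (Ideal.subset_span ⟨j, hj, rfl⟩))).resolve_left hcQ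
    rw [Finset.card_insert_of_notMem hi]
    push_cast
    exact (add_le_add_left h3 1).trans (Ideal.height_add_one_le_of_lt_of_isPrime hlt)

theorem lexMonic_iff {C : Type*} [CommRing C] [Nontrivial C] {n : ℕ}
    (f : MvPolynomial (Fin n) C) :
    LexMonic f ↔ (MonomialOrder.lex (σ := Fin n)).Monic f := by
  constructor
  · rintro ⟨d, hd, h⟩
    have : (MonomialOrder.lex (σ := Fin n)).degree f = d := by
      apply (MonomialOrder.lex (σ := Fin n)).toSyn.injective
      apply le_antisymm
      · rw [MonomialOrder.degree_le_iff]
        intro e he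
        by_contra hlt
        rw [not_le] at hlt
        exact (MvPolynomial.mem_support_iff.1 he) (h e hlt)
      · apply MonomialOrder.le_degree
        rw [MvPolynomial.mem_support_iff, hd]
        exact one_ne_zero
    rw [MonomialOrder.Monic, MonomialOrder.leadingCoeff, this, hd]
  · intro h
    refine ⟨_, h, fun e he => ?_⟩
    exact MonomialOrder.coeff_eq_zero_of_lt (m := MonomialOrder.lex (σ := Fin n)) he

/-- The multiplicative set of lexicographically monic polynomials. -/
def lexSub (C : Type*) [CommRing C] [Nontrivial C] (n : ℕ) : Submonoid (MvPolynomial (Fin n) C) where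
  carrier := {f | LexMonic f}
  one_mem' := (lexMonic_iff _).2 MonomialOrder.monic_one
  mul_mem' ha hb := (lexMonic_iff _).2 (((lexMonic_iff _).1 ha).mul ((lexMonic_iff _).1 hb))

theorem lexMonic_exists_add_mul {C : Type*} [CommRing C] [Nontrivial C] {n : ℕ}
    (f g : MvPolynomial (Fin n) C) (hf : LexMonic f) : ∃ M, LexMonic (g + M * f) := by
  classical
  obtain _ | n := n
  · obtain ⟨d, hd, -⟩ := hf
    refine ⟨1 - g, d, ?_, fun e he => ?_⟩
    · have : f = 1 := by
        rw [MvPolynomial.eq_C_of_isEmpty f, Subsingleton.elim 0 d, hd, map_one]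
      rw [this]
      simp [Subsingleton.elim d 0]
    · exact absurd he (by rw [Subsingleton.elim e d]; exact lt_irrefl _)
  · rw [lexMonic_iff] at hf
    refine ⟨MvPolynomial.monomial (Finsupp.single 0 (MvPolynomial.degreeOf 0 g + 1)) 1, ?_⟩
    rw [lexMonic_iff, add_comm g]
    set m := MonomialOrder.lex (σ := Fin (n + 1))
    have h1 : m.Monic (MvPolynomial.monomial
      (Finsupp.single 0 (MvPolynomial.degreeOf 0 g + 1)) (1 : C)) := MonomialOrder.monic_monomial_one
    refine (h1.mul hf).add_of_lt ?_
    rw [MonomialOrder.degree_mul_of_mul_leadingCoeff_ne_zero (by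
      rw [h1.leadingCoeff_eq_one, hf.leadingCoeff_eq_one, one_mul]; exact one_ne_zero)]
    rw [MonomialOrder.degree_monomial, if_neg one_ne_zero]
    rw [MonomialOrder.lex_lt_iff, Finsupp.Lex.lt_iff]
    refine ⟨0, fun j hj => absurd hj (by simp), ?_⟩
    have h2 : (m.degree g) 0 ≤ MvPolynomial.degreeOf 0 g := by
      by_cases hg : g = 0
      · simp [hg]
      · exact MvPolynomial.le_degreeOf_of_mem_support 0 (m.degree_mem_support hg)
    show (m.degree g) 0 <
      ((Finsupp.single 0 (MvPolynomial.degreeOf 0 g + 1) + m.degree f : Fin (n + 1) →₀ ℕ)) 0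
    rw [Finsupp.add_apply, Finsupp.single_eq_same]
    omega

theorem lexMonic_of_leadingCoeff {C : Type*} [CommRing C] [Nontrivial C] {n : ℕ}
    (f : MvPolynomial (Fin (n + 1)) C)
    (h : LexMonic (MvPolynomial.finSuccEquiv C n f).leadingCoeff) : LexMonic f := by
  obtain ⟨d, hd, hz⟩ := h
  refine ⟨Finsupp.cons (MvPolynomial.finSuccEquiv C n f).natDegree d, ?_, fun e he => ?_⟩
  · rw [← MvPolynomial.finSuccEquiv_coeff_coeff]; exact hd
  · rw [← Finsupp.cons_tail e] at he ⊢
    rw [← MvPolynomial.finSuccEquiv_coeff_coeff]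
    set k := (MvPolynomial.finSuccEquiv C n f).natDegree with hk
    obtain ⟨i, hi, hlt⟩ := Finsupp.Lex.lt_iff.1 he
    change ∀ j < i, (Finsupp.cons k d) j = (Finsupp.cons (e 0) e.tail) j at hi
    change (Finsupp.cons k d) i < (Finsupp.cons (e 0) e.tail) i at hlt
    refine Fin.cases (fun hi hlt => ?_) (fun i hi hlt => ?_) i hi hlt
    · rw [Finsupp.cons_zero, Finsupp.cons_zero] at hlt
      rw [Polynomial.coeff_eq_zero_of_natDegree_lt hlt, MvPolynomial.coeff_zero]
    · have h0 := hi 0 (Fin.succ_pos i)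
      rw [Finsupp.cons_zero, Finsupp.cons_zero] at h0
      rw [← h0]
      apply hz
      rw [Finsupp.Lex.lt_iff]
      refine ⟨i, fun j hj => ?_, ?_⟩
      · have := hi j.succ (Fin.succ_lt_succ_iff.2 hj)
        rwa [Finsupp.cons_succ, Finsupp.cons_succ] at this
      · rwa [Finsupp.cons_succ, Finsupp.cons_succ] at hlt

theorem aux_exists_lead {R : Type*} [CommRing R] (P : Ideal (Polynomial R)) (p : Ideal R)
    (hp : p.map Polynomial.C ≤ P) (h : ¬ P ≤ p.map Polynomial.C) :
    ∃ f ∈ P, f.leadingCoeff ∉ p := by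
  by_contra hcon
  push Not at hcon
  apply h
  suffices H : ∀ k : ℕ, ∀ f ∈ P, f.natDegree < k → f ∈ p.map Polynomial.C from
    fun f hf => H _ f hf (Nat.lt_succ_self _)
  intro k
  induction k with
  | zero => intro f _ h; omega
  | succ k ih =>
    intro f hf hk
    have h1 : Polynomial.C f.leadingCoeff ∈ p.map Polynomial.C :=
      Ideal.mem_map_of_mem _ (hcon f hf)
    have h2 : Polynomial.C f.leadingCoeff * Polynomial.X ^ f.natDegree ∈ p.map Polynomial.C :=
      Ideal.mul_mem_right _ _ h1
    by_cases h0 : f.natDegree = 0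
    · rw [Polynomial.eq_C_of_natDegree_eq_zero h0]
      rw [Polynomial.leadingCoeff, h0] at h1
      exact h1
    · have h3 : f.eraseLead ∈ p.map Polynomial.C := by
        apply ih
        · rw [← Polynomial.self_sub_C_mul_X_pow]
          exact P.sub_mem hf (hp h2)
        · have := Polynomial.eraseLead_natDegree_le f
          omega
      rw [← Polynomial.eraseLead_add_C_mul_X_pow f]
      exact Ideal.add_mem _ h3 h2

theorem aux_height_X {C : Type*} [CommRing C] [IsNoetherianRing C] [Nontrivial C] (D : ℕ)
    (hdim : ringKrullDim C = (D : WithBot ℕ∞)) (n : ℕ) :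
    ∀ P : Ideal (MvPolynomial (Fin n) C), P.IsPrime → (∀ f ∈ P, ¬ LexMonic f) →
      P.height ≤ D := by
  induction n with
  | zero =>
    intro P hP _
    have := Ideal.height_le_ringKrullDim_of_isPrime (I := P)
    rw [MvPolynomial.ringKrullDim_of_isNoetherianRing, hdim] at this
    simp at this
    exact_mod_cast this
  | succ n ih =>
    intro P hP hX
    let e := (MvPolynomial.finSuccEquiv C n).toRingEquiv
    let R := MvPolynomial (Fin n) C
    let Q : Ideal (Polynomial R) := P.map e
    have hQ : Q.IsPrime := Ideal.map_isPrime_of_equiv e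
    have hh : Q.height = P.height := e.height_map P
    rw [← hh]
    have hmem : ∀ F ∈ Q, ¬ LexMonic F.leadingCoeff := by
      intro F hF hl
      obtain ⟨f, hf, rfl⟩ := (Ideal.mem_map_of_equiv e F).1 hF
      exact hX f hf (lexMonic_of_leadingCoeff f hl)
    let p : Ideal R := Q.comap Polynomial.C
    have hp : p.IsPrime := Ideal.comap_isPrime _ _
    have hover : Q.LiesOver p := ⟨rfl⟩
    have hpX : ∀ f ∈ p, ¬ LexMonic f := by
      intro f hf hl
      apply hmem (Polynomial.C f) hf
      rwa [Polynomial.leadingCoeff_C]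
    obtain ⟨h1, h2⟩ := aux_height_poly p Q
    by_cases hle : Q ≤ p.map Polynomial.C
    · exact (h2 hle).trans (ih p hp hpX)
    · obtain ⟨F, hF, hFp⟩ := aux_exists_lead Q p Ideal.map_comap_le hle
      have hd : Disjoint ((Ideal.leadingCoeff Q : Ideal R) : Set R) (lexSub C n) := by
        rw [Set.disjoint_left]
        intro x hx hxl
        obtain ⟨G, hG, rfl⟩ := (Ideal.mem_leadingCoeff Q x).1 hx
        exact hmem G hG hxl
      obtain ⟨q, hq, hLq, hdq⟩ := Ideal.exists_le_prime_disjoint _ _ hd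
      have hpq : p < q := by
        refine lt_of_le_of_ne (fun x hx => hLq ?_) ?_
        · exact (Ideal.mem_leadingCoeff Q x).2 ⟨Polynomial.C x, hx, Polynomial.leadingCoeff_C x⟩
        · intro heq
          exact hFp (heq ▸ hLq ((Ideal.mem_leadingCoeff Q _).2 ⟨F, hF, rfl⟩))
      exact h1.trans ((Ideal.height_add_one_le_of_lt_of_isPrime hpq).trans
        (ih q hq (fun f hf hl => Set.disjoint_left.1 hdq hf hl)))

theorem aux_mem_of_X {C : Type*} [CommRing C] [Nontrivial C] {n : ℕ}
    (I : Ideal (MvPolynomial (Fin n) C))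
    (h : ∀ P : Ideal (MvPolynomial (Fin n) C), P.IsPrime → (∀ f ∈ P, ¬ LexMonic f) → ¬ I ≤ P) :
    ∃ f ∈ I, LexMonic f := by
  by_contra hcon
  push Not at hcon
  obtain ⟨q, hq, hLq, hdq⟩ := Ideal.exists_le_prime_disjoint I (lexSub C n)
    (Set.disjoint_left.2 fun x hx hl => hcon x hx hl)
  exact h q hq (fun f hf hl => Set.disjoint_left.1 hdq hf hl) hLq

theorem negO_negO (r : ℕ) (i : Fin (2 * r + 1)) : negO r (negO r i) = i := by
  ext; simp only [negO]; omega

theorem TOlong_mulVec {R : Type*} [CommRing R] (r : ℕ) (i j k : Fin (2 * r + 1)) (ξ : R)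
    (b : Fin (2 * r + 1) → R) :
    (TOlong r i j ξ).mulVec b k = b k + (if k = i then ξ * b j else 0)
      - (if k = negO r j then ξ * b (negO r i) else 0) := by
  simp only [TOlong, Matrix.sub_mulVec, Matrix.add_mulVec, Matrix.one_mulVec, Matrix.smul_mulVec,
    Matrix.single_mulVec, Pi.sub_apply, Pi.add_apply, Pi.smul_apply, Function.update_apply,
    Pi.zero_apply, smul_eq_mul, one_mul, mul_ite, mul_zero]

theorem op_family {R : Type*} [CommRing R] (r : ℕ) (i0 : Fin r) (σ : Fin r → Fin (2 * r + 1))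
    (m : Fin (2 * r + 1)) (hm : m ≠ midO r) (hinj : Function.Injective σ)
    (h1 : ∀ j, j ≠ i0 → σ j ≠ midO r) (h2 : ∀ j, j ≠ i0 → σ j ≠ m)
    (h3 : ∀ j, j ≠ i0 → σ j ≠ negO r m) (h4 : ∀ i j, i ≠ i0 → j ≠ i0 → negO r (σ i) ≠ σ j)
    (ξ : Fin r → R) (b : Fin (2 * r + 1) → R) (t : Finset (Fin r)) (ht : i0 ∉ t) :
    ∃ E ∈ EOO r t.card R,
      (∀ j, j ≠ i0 → E.mulVec b (σ j) = b (σ j) + if j ∈ t then ξ j * b m else 0) ∧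
      (∀ j, j ≠ i0 → E.mulVec b (negO r (σ j)) = b (negO r (σ j))) ∧
      E.mulVec b m = b m ∧
      E.mulVec b (negO r m) = b (negO r m) - ∑ j ∈ t, ξ j * b (negO r (σ j)) := by
  have hmm : m ≠ negO r m := by
    intro h
    apply hm
    have := congrArg Fin.val h
    ext
    simp only [negO, midO] at this ⊢
    omega
  induction t using Finset.induction_on with
  | empty =>
    refine ⟨1, ⟨[], by simp, by simp, by simp⟩, ?_⟩
    simp
  | insert i t hi ih =>
    rw [Finset.mem_insert, not_or] at ht
    obtain ⟨E, ⟨L, hL, hLe, rfl⟩, e1, e2, e3, e4⟩ := ih ht.2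
    have hi0 : i ≠ i0 := fun h => ht.1 h.symm
    refine ⟨TOlong r (σ i) m (ξ i) * L.prod, ⟨TOlong r (σ i) m (ξ i) :: L, ?_, ?_, ?_⟩, ?_⟩
    · rw [Finset.card_insert_of_notMem hi, List.length_cons]; omega
    · intro x hx
      rcases List.mem_cons.1 hx with rfl | hx
      · exact Or.inl ⟨σ i, m, ξ i, h1 i hi0, hm, h2 i hi0, h3 i hi0, rfl⟩
      · exact hLe x hx
    · rw [List.prod_cons]
    · rw [← Matrix.mulVec_mulVec]
      simp only [TOlong_mulVec, e3, e2 i hi0]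
      refine ⟨fun j hj => ?_, fun j hj => ?_, ?_, ?_⟩
      · rw [e1 j hj, if_neg (h3 j hj), sub_zero]
        by_cases hji : j = i
        · subst hji; simp [hi]
        · simp [hji, hinj.ne hji]
      · rw [e2 j hj, if_neg (h4 j i hj hi0), if_neg, add_zero, sub_zero]
        intro h
        apply h2 j hj
        rw [← negO_negO r (σ j), h, negO_negO]
      · rw [if_neg (h2 i hi0).symm, if_neg hmm, add_zero, sub_zero]
      · rw [if_neg (h3 i hi0).symm, if_pos trivial, e4, Finset.sum_insert hi]
        ring

/-- The positive coordinate. -/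
def uI (r : ℕ) (j : Fin r) : Fin (2 * r + 1) := ⟨j.val, by omega⟩
/-- The negative coordinate. -/
def vI (r : ℕ) (j : Fin r) : Fin (2 * r + 1) := ⟨2 * r - j.val, by omega⟩

theorem negO_uI (r : ℕ) (j : Fin r) : negO r (uI r j) = vI r j := rfl
theorem negO_vI (r : ℕ) (j : Fin r) : negO r (vI r j) = uI r j := negO_negO r (uI r j)
theorem uI_inj (r : ℕ) : Function.Injective (uI r) := by
  intro i j h; have := congrArg Fin.val h; ext; exact this
theorem vI_inj (r : ℕ) : Function.Injective (vI r) := by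
  intro i j h
  have := congrArg Fin.val h
  simp only [vI] at this
  ext; omega
theorem uI_ne_mid (r : ℕ) (j : Fin r) : uI r j ≠ midO r := by
  intro h
  have := congrArg Fin.val h
  simp only [uI, midO] at this
  omega
theorem vI_ne_mid (r : ℕ) (j : Fin r) : vI r j ≠ midO r := by
  intro h
  have := congrArg Fin.val h
  simp only [vI, midO] at this
  omega
theorem uI_ne_vI (r : ℕ) (i j : Fin r) : uI r i ≠ vI r j := by
  intro h
  have := congrArg Fin.val h
  simp only [uI, vI] at this
  omega

theorem card_erase_fin (r : ℕ) (i0 : Fin r) : (Finset.univ.erase i0).card = r - 1 := by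
  simp

theorem opA {R : Type*} [CommRing R] (r : ℕ) (i0 : Fin r) (ξ : Fin r → R)
    (b : Fin (2 * r + 1) → R) : ∃ E ∈ EOO r (r - 1) R,
      (∀ j, j ≠ i0 → E.mulVec b (uI r j) = b (uI r j) + ξ j * b (uI r i0)) ∧
      (∀ j, j ≠ i0 → E.mulVec b (vI r j) = b (vI r j)) ∧
      E.mulVec b (uI r i0) = b (uI r i0) ∧
      E.mulVec b (vI r i0) = b (vI r i0) - ∑ j ∈ Finset.univ.erase i0, ξ j * b (vI r j) := by
  obtain ⟨E, hE, h1, h2, h3, h4⟩ := op_family r i0 (uI r) (uI r i0) (uI_ne_mid r i0) (uI_inj r)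
    (fun j _ => uI_ne_mid r j) (fun j hj => (uI_inj r).ne hj) (fun j _ => uI_ne_vI r j i0)
    (fun i j _ _ => (uI_ne_vI r j i).symm) ξ b (Finset.univ.erase i0) (by simp)
  rw [card_erase_fin] at hE
  refine ⟨E, hE, fun j hj => ?_, h2, h3, h4⟩
  rw [h1 j hj, if_pos (by simp [hj])]

theorem opB {R : Type*} [CommRing R] (r : ℕ) (i0 : Fin r) (ξ : Fin r → R)
    (b : Fin (2 * r + 1) → R) : ∃ E ∈ EOO r (r - 1) R,
      (∀ j, j ≠ i0 → E.mulVec b (vI r j) = b (vI r j) + ξ j * b (uI r i0)) ∧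
      (∀ j, j ≠ i0 → E.mulVec b (uI r j) = b (uI r j)) ∧
      E.mulVec b (uI r i0) = b (uI r i0) ∧
      E.mulVec b (vI r i0) = b (vI r i0) - ∑ j ∈ Finset.univ.erase i0, ξ j * b (uI r j) := by
  obtain ⟨E, hE, h1, h2, h3, h4⟩ := op_family r i0 (vI r) (uI r i0) (uI_ne_mid r i0) (vI_inj r)
    (fun j _ => vI_ne_mid r j) (fun j _ => (uI_ne_vI r i0 j).symm) (fun j hj => (vI_inj r).ne hj)
    (fun i j _ _ => by rw [negO_vI]; exact uI_ne_vI r i j) ξ b (Finset.univ.erase i0) (by simp)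
  rw [card_erase_fin] at hE
  simp only [negO_vI, negO_uI] at h2 h4
  refine ⟨E, hE, fun j hj => ?_, h2, h3, h4⟩
  rw [h1 j hj, if_pos (by simp [hj])]

theorem opC {R : Type*} [CommRing R] (r : ℕ) (i0 : Fin r) (ξ : Fin r → R)
    (b : Fin (2 * r + 1) → R) : ∃ E ∈ EOO r (r - 1) R,
      (∀ j, j ≠ i0 → E.mulVec b (vI r j) = b (vI r j) + ξ j * b (vI r i0)) ∧
      (∀ j, j ≠ i0 → E.mulVec b (uI r j) = b (uI r j)) ∧
      E.mulVec b (vI r i0) = b (vI r i0) ∧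
      E.mulVec b (uI r i0) = b (uI r i0) - ∑ j ∈ Finset.univ.erase i0, ξ j * b (uI r j) := by
  obtain ⟨E, hE, h1, h2, h3, h4⟩ := op_family r i0 (vI r) (vI r i0) (vI_ne_mid r i0) (vI_inj r)
    (fun j _ => vI_ne_mid r j) (fun j hj => (vI_inj r).ne hj)
    (fun j _ => by rw [negO_vI]; exact (uI_ne_vI r i0 j).symm)
    (fun i j _ _ => by rw [negO_vI]; exact uI_ne_vI r i j) ξ b (Finset.univ.erase i0) (by simp)
  rw [card_erase_fin] at hE
  simp only [negO_vI] at h2 h4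
  refine ⟨E, hE, fun j hj => ?_, h2, h3, h4⟩
  rw [h1 j hj, if_pos (by simp [hj])]

theorem EOO_mul {R : Type*} [CommRing R] (r : ℕ) {N M : ℕ}
    {E F : Matrix (Fin (2 * r + 1)) (Fin (2 * r + 1)) R}
    (hE : E ∈ EOO r N R) (hF : F ∈ EOO r M R) : E * F ∈ EOO r (N + M) R := by
  obtain ⟨L, hL, hLe, rfl⟩ := hE
  obtain ⟨K, hK, hKe, rfl⟩ := hF
  refine ⟨L ++ K, ?_, ?_, ?_⟩
  · rw [List.length_append]; omega
  · intro m hm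
    rcases List.mem_append.1 hm with h | h
    · exact hLe m h
    · exact hKe m h
  · rw [List.prod_append]

theorem EOO_mono {R : Type*} [CommRing R] (r : ℕ) {N M : ℕ} (h : N ≤ M)
    {E : Matrix (Fin (2 * r + 1)) (Fin (2 * r + 1)) R}
    (hE : E ∈ EOO r N R) : E ∈ EOO r M R := by
  obtain ⟨L, hL, hLe, rfl⟩ := hE
  exact ⟨L, hL.trans h, hLe, rfl⟩

theorem exists_coeffs {R ι : Type*} [CommRing R] (J : Finset ι) (a : ι → R) (f : R)
    (hf : f ∈ Ideal.span (a '' (J : Set ι))) : ∃ ξ : ι → R, f = ∑ j ∈ J, ξ j * a j := by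
  classical
  rw [Ideal.span, Submodule.mem_span_image_finset_iff_exists_fun] at hf
  obtain ⟨c, hc⟩ := hf
  refine ⟨fun j => if h : j ∈ J then c ⟨j, h⟩ else 0, ?_⟩
  rw [← hc, ← Finset.sum_coe_sort J]
  refine Finset.sum_congr rfl fun j _ => ?_
  simp

/-- For an isotropic unimodular column, a prime containing all negative coordinates
does not contain all the positive ones. -/
theorem iso_prime {R : Type*} [CommRing R] (r : ℕ) (b : Fin (2 * r + 1) → R) (hb : b ∈ IUmO r R)
    (P : Ideal R) (hP : P.IsPrime) (hv : ∀ j, b (vI r j) ∈ P) : ∃ j, b (uI r j) ∉ P := by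
  by_contra hcon
  push Not at hcon
  obtain ⟨h1, h2⟩ := hb
  have hs : ∑ i : Fin r, b ⟨i.val, by omega⟩ * b ⟨2 * r - i.val, by omega⟩ ∈ P :=
    P.sum_mem fun i _ => P.mul_mem_left _ (hv i)
  have h0 : b (midO r) ∈ P := by
    have h3 : b (midO r) * b (midO r) ∈ P := by
      have h4 := P.sub_mem P.zero_mem hs
      rw [← h2, quadO, add_sub_cancel_right] at h4
      exact h4
    rcases hP.mem_or_mem h3 with h | h <;> exact h
  apply hP.ne_top
  rw [eq_top_iff, ← h1, Ideal.span_le]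
  rintro _ ⟨i, rfl⟩
  by_cases hi : i = midO r
  · simp only [hi, if_true]
    exact P.mul_mem_left _ h0
  · simp only [if_neg hi]
    by_cases hlt : i.val < r
    · exact hcon ⟨i.val, hlt⟩
    · have hne : i.val ≠ r := fun h => hi (Fin.ext h)
      have h5 := hv ⟨2 * r - i.val, by omega⟩
      have h6 : vI r ⟨2 * r - i.val, by omega⟩ = i := by
        ext; simp only [vI]; omega
      rwa [h6] at h5

theorem main_aux {C : Type*} [CommRing C] [IsNoetherianRing C] [Nontrivial C] (n D : ℕ)
    (hdim : ringKrullDim C = (D : WithBot ℕ∞))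
    (r : ℕ) (hr : D + 2 ≤ r) (i0 : Fin r)
    (b : Fin (2 * r + 1) → MvPolynomial (Fin n) C)
    (hb : b ∈ IUmO r (MvPolynomial (Fin n) C)) :
    ∃ E ∈ EOO r (5 * (r - 1)) (MvPolynomial (Fin n) C), LexMonic (E.mulVec b (vI r i0)) := by
  classical
  set J := Finset.univ.erase i0 with hJ
  have hJc : J.card = r - 1 := card_erase_fin r i0
  have hmemJ : ∀ j, j ∈ J ↔ j ≠ i0 := fun j => by simp [hJ]
  -- absolute stable range over the primes without lexicographically monic elements
  have key : ∀ (a : Fin r → MvPolynomial (Fin n) C) (c : MvPolynomial (Fin n) C),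
      ∃ l : Fin r → MvPolynomial (Fin n) C, ∀ P : Ideal (MvPolynomial (Fin n) C), P.IsPrime →
        (∀ f ∈ P, ¬ LexMonic f) → (∀ j, j ≠ i0 → a j + l j * c ∈ P) →
        c ∈ P ∧ ∀ j, j ≠ i0 → a j ∈ P := by
    intro a c
    obtain ⟨l, hl⟩ := aux_asr a c J
    refine ⟨l, fun P hP hX h => ?_⟩
    have hc : c ∈ P := by
      refine (hl P hP fun j hj => h j ((hmemJ j).1 hj)).resolve_right fun hh => ?_
      have h5 := hh.trans (aux_height_X D hdim n P hP hX)
      rw [hJc] at h5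
      have : r - 1 ≤ D := by exact_mod_cast h5
      omega
    refine ⟨hc, fun j hj => ?_⟩
    have := P.sub_mem (h j hj) (P.mul_mem_left (l j) hc)
    rwa [add_sub_cancel_right] at this
  -- step 1
  obtain ⟨l1, hl1⟩ := key (fun j => b (uI r j)) (b (uI r i0))
  obtain ⟨E1, hE1, p1, p2, p3, p4⟩ := opA r i0 l1 b
  set b1 := E1.mulVec b with hb1
  have s1 : ∀ P : Ideal (MvPolynomial (Fin n) C), P.IsPrime → (∀ f ∈ P, ¬ LexMonic f) →
      (∀ j, b1 (vI r j) ∈ P) → ¬ (∀ j, j ≠ i0 → b1 (uI r j) ∈ P) := by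
    intro P hP hX hv hu
    have hv' : ∀ j, j ≠ i0 → b (vI r j) ∈ P := fun j hj => by rw [← p2 j hj]; exact hv j
    have hv0 : b (vI r i0) ∈ P := by
      have h5 : (∑ j ∈ J, l1 j * b (vI r j)) ∈ P :=
        P.sum_mem fun j hj => P.mul_mem_left _ (hv' j ((hmemJ j).1 hj))
      have h6 := hv i0
      rw [p4] at h6
      have := P.add_mem h6 h5
      rwa [sub_add_cancel] at this
    obtain ⟨hc, ha⟩ := hl1 P hP hX (fun j hj => by
      have := hu j hj
      rwa [p1 j hj] at this)
    obtain ⟨j, hj⟩ := iso_prime r b hb P hP (fun j => by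
      by_cases h : j = i0
      · rw [h]; exact hv0
      · exact hv' j h)
    by_cases h : j = i0
    · rw [h] at hj; exact hj hc
    · exact hj (ha j h)
  -- step 2
  obtain ⟨f, hf, hfm⟩ := aux_mem_of_X
    (Ideal.span ((fun j => b1 (uI r j)) '' (J : Set (Fin r))) ⊔
      Ideal.span (Set.range fun j => b1 (vI r j))) (by
    intro P hP hX hle
    refine s1 P hP hX (fun j => hle (Ideal.mem_sup_right (Ideal.subset_span ⟨j, rfl⟩)))
      (fun j hj => hle (Ideal.mem_sup_left (Ideal.subset_span ⟨j, (hmemJ j).2 hj, rfl⟩))))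
  obtain ⟨g, hg, w, hw, hgw⟩ := Submodule.mem_sup.1 hf
  obtain ⟨ξ, hξ⟩ := exists_coeffs J _ g hg
  obtain ⟨M, hM⟩ := lexMonic_exists_add_mul f (b1 (uI r i0)) hfm
  obtain ⟨E2, hE2, q1, q2, q3, q4⟩ := opC r i0 (fun j => - (M * ξ j)) b1
  set b2 := E2.mulVec b1 with hb2
  have s2 : ∀ P : Ideal (MvPolynomial (Fin n) C), P.IsPrime → (∀ f ∈ P, ¬ LexMonic f) →
      (∀ j, b2 (vI r j) ∈ P) → b2 (uI r i0) ∉ P := by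
    intro P hP hX hv hu
    have hv0 : b1 (vI r i0) ∈ P := by rw [← q3]; exact hv i0
    have hv1 : ∀ j, b1 (vI r j) ∈ P := by
      intro j
      by_cases h : j = i0
      · rw [h]; exact hv0
      · have h5 := hv j
        rw [q1 j h] at h5
        have := P.sub_mem h5 (P.mul_mem_left (-(M * ξ j)) hv0)
        rwa [add_sub_cancel_right] at this
    have hwP : w ∈ P := by
      have h5 : Ideal.span (Set.range fun j => b1 (vI r j)) ≤ P := by
        rw [Ideal.span_le]
        rintro _ ⟨j, rfl⟩
        exact hv1 j
      exact h5 hw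
    apply hX _ _ hM
    have h6 : b1 (uI r i0) + M * f = b2 (uI r i0) + M * w := by
      rw [q4, ← hgw, hξ]
      simp only [neg_mul, Finset.sum_neg_distrib, mul_assoc, ← Finset.mul_sum]
      ring
    rw [h6]
    exact P.add_mem hu (P.mul_mem_left _ hwP)
  -- step 3
  obtain ⟨l3, hl3⟩ := key (fun j => b2 (vI r j)) (b2 (uI r i0) * b2 (uI r i0))
  obtain ⟨E3, hE3, t1, t2, t3, t4⟩ := opB r i0 (fun j => l3 j * b2 (uI r i0)) b2
  set b3 := E3.mulVec b2 with hb3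
  have s3 : ∀ P : Ideal (MvPolynomial (Fin n) C), P.IsPrime → (∀ f ∈ P, ¬ LexMonic f) →
      (∀ j, j ≠ i0 → b3 (vI r j) ∈ P) → b3 (vI r i0) ∉ P := by
    intro P hP hX hv hv0
    obtain ⟨hc, ha⟩ := hl3 P hP hX (fun j hj => by
      have := hv j hj
      rwa [t1 j hj, mul_assoc] at this)
    have hu : b2 (uI r i0) ∈ P := by
      rcases hP.mem_or_mem hc with h | h <;> exact h
    refine s2 P hP hX (fun j => ?_) hu
    by_cases h : j = i0
    · rw [h]
      rw [t4] at hv0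
      have h5 : (∑ j ∈ J, l3 j * b2 (uI r i0) * b2 (uI r j)) ∈ P :=
        P.sum_mem fun j _ => P.mul_mem_right _ (P.mul_mem_left _ hu)
      have := P.add_mem hv0 h5
      rwa [sub_add_cancel] at this
    · exact ha j h
  -- step 4
  obtain ⟨l4, hl4⟩ := key (fun j => b3 (vI r j)) (b3 (vI r i0))
  obtain ⟨E4, hE4, u1, u2, u3, u4⟩ := opC r i0 l4 b3
  set b4 := E4.mulVec b3 with hb4
  have s4 : ∀ P : Ideal (MvPolynomial (Fin n) C), P.IsPrime → (∀ f ∈ P, ¬ LexMonic f) →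
      ¬ (∀ j, j ≠ i0 → b4 (vI r j) ∈ P) := by
    intro P hP hX hv
    obtain ⟨hc, ha⟩ := hl4 P hP hX (fun j hj => by
      have := hv j hj
      rwa [u1 j hj] at this)
    exact s3 P hP hX ha hc
  -- step 5
  obtain ⟨f5, hf5, hfm5⟩ := aux_mem_of_X
    (Ideal.span ((fun j => b4 (vI r j)) '' (J : Set (Fin r)))) (by
    intro P hP hX hle
    exact s4 P hP hX (fun j hj => hle (Ideal.subset_span ⟨j, (hmemJ j).2 hj, rfl⟩)))
  obtain ⟨ζ, hζ⟩ := exists_coeffs J _ f5 hf5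
  obtain ⟨M5, hM5⟩ := lexMonic_exists_add_mul f5 (b4 (vI r i0)) hfm5
  obtain ⟨E5, hE5, w1, w2, w3, w4⟩ := opA r i0 (fun j => - (M5 * ζ j)) b4
  refine ⟨E5 * (E4 * (E3 * (E2 * E1))), EOO_mono r (by omega)
    (EOO_mul r hE5 (EOO_mul r hE4 (EOO_mul r hE3 (EOO_mul r hE2 hE1)))), ?_⟩
  have h7 : (E5 * (E4 * (E3 * (E2 * E1)))).mulVec b (vI r i0) = b4 (vI r i0) + M5 * f5 := by
    simp only [← Matrix.mulVec_mulVec]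
    rw [← hb1, ← hb2, ← hb3, ← hb4, w4, hζ]
    simp only [neg_mul, Finset.sum_neg_distrib, mul_assoc, ← Finset.mul_sum]
    ring
  rw [h7]
  exact hM5

/-- Obtaining a lexicographically monic entry (odd case): any
`b ∈ IUm_{2r+1}(C[x_1,…,x_n])` can be transformed by at most `12r−8` elementary
orthogonal transvections into a column whose entry at position `−2` is
lexicographically monic. -/
theorem odd_make_lexMonic
    (C : Type*) [CommRing C] [IsNoetherianRing C] (n D : ℕ)
    (hdim : ringKrullDim C = (D : WithBot ℕ∞))
    (r : ℕ) (hr : max 3 (D + 2) ≤ r)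
    (b : Fin (2 * r + 1) → MvPolynomial (Fin n) C)
    (hb : b ∈ IUmO r (MvPolynomial (Fin n) C)) :
    ∃ E ∈ EOO r (12 * r - 8) (MvPolynomial (Fin n) C),
      LexMonic (E.mulVec b ⟨2 * r - 1, by omega⟩) := by
  have hC : Nontrivial C := by
    by_contra h
    rw [not_nontrivial_iff_subsingleton] at h
    rw [ringKrullDim_eq_bot_of_subsingleton] at hdim
    exact absurd hdim (by simp)
  have hr1 : D + 2 ≤ r := (le_max_right _ _).trans hr
  obtain ⟨E, hE, hl⟩ := main_aux n D hdim r hr1 ⟨1, by omega⟩ b hb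
  exact ⟨E, EOO_mono r (by omega) hE, hl⟩
end

section
/- Let R be a commutative ring, r ≥ 2, and M ∈ Θ(r,R). Then the block matrix U(M) = [[1_r, 0],[M, 1_r]] lies in O(2r,R) and can be expressed as a product of r(r−1)/2 elementary orthogonal transvections; explicitly, if M = Σ_{1 ≤ j < i ≤ r} ξ_{i,j}(e_{r+1−i,j} − e_{r+1−j,i}), then U(M) = Π_{1 ≤ i < j ≤ r} T_{−i,j}(ξ_{i,j}). -/
open Matrix

section EvenDefs

variable {R : Type*} [CommRing R]

/-- In the basis `e_1,…,e_r,e_{-r},…,e_{-1}` of `R^{2r}` (0-indexed by `Fin (2*r)`),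
the position of `e_{-i}` given the position of `e_i` (and vice versa). -/
def negE (r : ℕ) (i : Fin (2 * r)) : Fin (2 * r) := ⟨2 * r - 1 - i.val, by omega⟩

/-- The split quadratic form `q(x) = ∑_{i=1}^r x_i x_{-i}` on `R^{2r}`. -/
def quadE (r : ℕ) (x : Fin (2 * r) → R) : R :=
  ∑ i : Fin r, x ⟨i.val, by omega⟩ * x ⟨2 * r - 1 - i.val, by omega⟩

/-- The even split orthogonal group `O(2r,R)`, as a set of matrices. -/
def OE (r : ℕ) (R : Type*) [CommRing R] : Set (Matrix (Fin (2 * r)) (Fin (2 * r)) R) :=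
  {g | IsUnit g ∧ ∀ x : Fin (2 * r) → R, quadE r (g.mulVec x) = quadE r x}

/-- The elementary orthogonal transvection `T_{i,j}(ξ) = e + ξ e_{i,j} - ξ e_{-j,-i}`. -/
def TE (r : ℕ) (i j : Fin (2 * r)) (ξ : R) : Matrix (Fin (2 * r)) (Fin (2 * r)) R :=
  1 + ξ • Matrix.single i j 1 - ξ • Matrix.single (negE r j) (negE r i) 1

/-- Being an elementary orthogonal transvection (even case): `T_{i,j}(ξ)` with `i ≠ ±j`. -/
def IsElemE (r : ℕ) (g : Matrix (Fin (2 * r)) (Fin (2 * r)) R) : Prop :=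
  ∃ i j : Fin (2 * r), ∃ ξ : R, i ≠ j ∧ i ≠ negE r j ∧ g = TE r i j ξ

/-- `EO(2r,R)^{≤N}` : products of at most `N` elementary orthogonal transvections. -/
def EOE (r N : ℕ) (R : Type*) [CommRing R] : Set (Matrix (Fin (2 * r)) (Fin (2 * r)) R) :=
  {g | ∃ L : List (Matrix (Fin (2 * r)) (Fin (2 * r)) R),
    L.length ≤ N ∧ (∀ m ∈ L, IsElemE r m) ∧ g = L.prod}

/-- `IUm_{2r}(R)` : isotropic unimodular columns. -/
def IUmE (r : ℕ) (R : Type*) [CommRing R] : Set (Fin (2 * r) → R) :=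
  {b | Ideal.span (Set.range b) = ⊤ ∧ quadE r b = 0}

end EvenDefs
/-- `Θ(r,R)`: `r × r` matrices that are antisymmetric with respect to the antidiagonal
and have zeroes on the antidiagonal. -/
def Theta (r : ℕ) (R : Type*) [CommRing R] : Set (Matrix (Fin r) (Fin r) R) :=
  {M | (∀ i j : Fin r, M ⟨r - 1 - j.val, by omega⟩ ⟨r - 1 - i.val, by omega⟩ = - M i j) ∧
    ∀ i : Fin r, M i ⟨r - 1 - i.val, by omega⟩ = 0}

/-- The block matrix `U(M) = [[1,0],[M,1]]`, `M ∈ Θ(r,R)`, written in the basis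
`e_1,…,e_r,e_{-r},…,e_{-1}`. -/
def Umat {R : Type*} [CommRing R] (r : ℕ) (M : Matrix (Fin r) (Fin r) R) :
    Matrix (Fin (2 * r)) (Fin (2 * r)) R :=
  fun i j =>
    if i.val < r then (if i = j then (1 : R) else 0)
    else if hj : j.val < r then M ⟨i.val - r, by omega⟩ ⟨j.val, hj⟩
    else (if i = j then 1 else 0)

section Helpers

variable {R : Type*} [CommRing R]

/-- The strictly lower-left block part of `Umat`. -/
def Nmat (r : ℕ) (M : Matrix (Fin r) (Fin r) R) : Matrix (Fin (2 * r)) (Fin (2 * r)) R :=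
  fun i j =>
    if i.val < r then 0
    else if hj : j.val < r then M ⟨i.val - r, by omega⟩ ⟨j.val, hj⟩ else 0

lemma Umat_eq (r : ℕ) (M : Matrix (Fin r) (Fin r) R) : Umat r M = 1 + Nmat r M := by
  ext i j
  simp only [Umat, Nmat, Matrix.add_apply, Matrix.one_apply]
  split_ifs with h1 h2 h3 h4 h5 <;> simp_all

lemma Nmat_mul (r : ℕ) (A B : Matrix (Fin r) (Fin r) R) : Nmat r A * Nmat r B = 0 := by
  ext i j
  rw [Matrix.mul_apply]
  apply Finset.sum_eq_zero
  intro k _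
  simp only [Nmat]
  split_ifs <;> simp

lemma Nmat_add (r : ℕ) (A B : Matrix (Fin r) (Fin r) R) :
    Nmat r (A + B) = Nmat r A + Nmat r B := by
  ext i j
  simp only [Nmat, Matrix.add_apply]
  split_ifs <;> simp

lemma Umat_add (r : ℕ) (A B : Matrix (Fin r) (Fin r) R) :
    Umat r (A + B) = Umat r A * Umat r B := by
  simp only [Umat_eq, Nmat_add, mul_add, add_mul, Nmat_mul, one_mul, mul_one]
  abel

lemma Umat_zero (r : ℕ) : Umat r (0 : Matrix (Fin r) (Fin r) R) = 1 := by
  rw [Umat_eq]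
  have : Nmat r (0 : Matrix (Fin r) (Fin r) R) = 0 := by
    ext i j
    simp [Nmat]
  rw [this, add_zero]

lemma Umat_isUnit (r : ℕ) (A : Matrix (Fin r) (Fin r) R) : IsUnit (Umat r A) := by
  refine ⟨⟨Umat r A, Umat r (-A), ?_, ?_⟩, rfl⟩
  · rw [← Umat_add, add_neg_cancel, Umat_zero]
  · rw [← Umat_add, neg_add_cancel, Umat_zero]

lemma Umat_list_sum {ι : Type*} (r : ℕ) (f : ι → Matrix (Fin r) (Fin r) R) (l : List ι) :
    Umat r (l.map f).sum = (l.map fun x => Umat r (f x)).prod := by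
  induction l with
  | nil => simp [Umat_zero]
  | cons a l ih => simp [Umat_add, ih]

lemma TE_eq (r : ℕ) (i j : Fin r) (ξ : R) :
    TE r (negE r ⟨i.val, by omega⟩) ⟨j.val, by omega⟩ ξ =
      Umat r (ξ • Matrix.single i.rev j 1 - ξ • Matrix.single j.rev i 1) := by
  rw [Umat_eq, TE, add_sub_assoc]
  congr 1
  ext ⟨a, ha⟩ ⟨b, hb⟩
  simp only [Nmat, Matrix.sub_apply, Matrix.smul_apply, Matrix.single_apply, negE, Fin.ext_iff,
    Fin.val_rev, smul_eq_mul]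
  have hi := i.isLt
  have hj := j.isLt
  by_cases h1 : a < r
  · rw [if_neg (by omega), if_neg (by omega), if_pos h1]; simp
  · rw [if_neg h1]
    by_cases h2 : b < r
    · rw [dif_pos h2]
      congr 3 <;> apply propext <;> omega
    · rw [dif_neg h2, if_neg (by omega), if_neg (by omega)]; simp

lemma Theta_rev (r : ℕ) (M : Matrix (Fin r) (Fin r) R) (hM : M ∈ Theta r R) (i j : Fin r) :
    M j.rev i = - M i.rev j := by
  rw [← hM.1 i.rev j]
  congr 1 <;> (ext; simp only [Fin.val_rev]; omega)

lemma Theta_diag (r : ℕ) (M : Matrix (Fin r) (Fin r) R) (hM : M ∈ Theta r R) (i : Fin r) :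
    M i.rev i = 0 := by
  rw [← hM.2 i.rev]
  congr 1
  ext; simp only [Fin.val_rev]; omega

lemma Theta_sum (r : ℕ) (M : Matrix (Fin r) (Fin r) R) (hM : M ∈ Theta r R) :
    M = ∑ p ∈ (Finset.univ : Finset (Fin r × Fin r)).filter (fun p => p.1 < p.2),
      (M p.1.rev p.2 • Matrix.single p.1.rev p.2 (1 : R)
        - M p.1.rev p.2 • Matrix.single p.2.rev p.1 1) := by
  ext a b
  obtain ⟨c, rfl⟩ : ∃ c : Fin r, a = c.rev := ⟨a.rev, by simp⟩
  rw [Matrix.sum_apply]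
  simp only [Matrix.sub_apply, Matrix.smul_apply, Matrix.single_apply, Fin.rev_inj, smul_eq_mul,
    mul_ite, mul_one, mul_zero]
  rw [Finset.sum_sub_distrib, Finset.sum_filter, Finset.sum_filter]
  have e1 : (∑ p : Fin r × Fin r, if p.1 < p.2 then
      (if p.1 = c ∧ p.2 = b then M p.1.rev p.2 else 0) else 0) =
      if c < b then M c.rev b else 0 := by
    rw [Finset.sum_eq_single (c, b)]
    · simp
    · rintro ⟨x, y⟩ _ h
      have : ¬ (x = c ∧ y = b) := by rintro ⟨rfl, rfl⟩; exact h rfl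
      simp [this]
    · simp
  have e2 : (∑ p : Fin r × Fin r, if p.1 < p.2 then
      (if p.2 = c ∧ p.1 = b then M p.1.rev p.2 else 0) else 0) =
      if b < c then M b.rev c else 0 := by
    rw [Finset.sum_eq_single (b, c)]
    · simp
    · rintro ⟨x, y⟩ _ h
      have : ¬ (y = c ∧ x = b) := by rintro ⟨rfl, rfl⟩; exact h rfl
      simp [this]
    · simp
  rw [e1, e2]
  rcases lt_trichotomy c b with h | h | h
  · simp [h, h.not_gt]
  · subst h; simp [Theta_diag r M hM]
  · simp [h, h.not_gt, Theta_rev r M hM b c]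

lemma card_pairs (r : ℕ) :
    ((Finset.univ : Finset (Fin r × Fin r)).filter (fun p => p.1 < p.2)).card
      = r * (r - 1) / 2 := by
  rw [Finset.card_filter, Fintype.sum_prod_type_right, ← Finset.sum_range_id,
    ← Fin.sum_univ_eq_sum_range (fun i => i)]
  refine Finset.sum_congr rfl fun j _ => ?_
  simp only
  rw [← Finset.card_filter, Finset.filter_gt_eq_Iio, Fin.card_Iio]

lemma Umat_quad (r : ℕ) (M : Matrix (Fin r) (Fin r) R) (hM : M ∈ Theta r R)
    (x : Fin (2 * r) → R) : quadE r ((Umat r M).mulVec x) = quadE r x := by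
  have key : ∀ a : Fin (2 * r), (Nmat r M).mulVec x a =
      if h : a.val < r then 0 else
        ∑ j : Fin r, M ⟨a.val - r, by omega⟩ j * x ⟨j.val, by omega⟩ := by
    intro a
    simp only [Matrix.mulVec, dotProduct, Nmat]
    split_ifs with h
    · simp
    · symm
      refine Finset.sum_of_injOn (fun j : Fin r => (⟨j.val, by omega⟩ : Fin (2 * r))) ?_ ?_ ?_ ?_
      · intro u _ v _ huv
        simpa [Fin.ext_iff] using huv
      · simp
      · intro k _ hk
        rw [dif_neg, zero_mul]
        intro hk'
        exact hk ⟨⟨k.val, hk'⟩, by simp, rfl⟩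
      · intro j _
        simp
  simp only [quadE, Umat_eq, Matrix.add_mulVec, Matrix.one_mulVec, Pi.add_apply, key]
  have e : ∀ i : Fin r, (⟨2 * r - 1 - i.val - r, by omega⟩ : Fin r) = i.rev := by
    intro i; ext; simp only [Fin.val_rev]; omega
  have s0 : ∑ p : Fin r × Fin r,
      x ⟨p.1.val, by omega⟩ * (M p.1.rev p.2 * x ⟨p.2.val, by omega⟩) = 0 := by
    refine Finset.sum_involution (fun p _ => p.swap) ?_ ?_ ?_ ?_
    · rintro ⟨i, j⟩ _
      simp only [Prod.fst_swap, Prod.snd_swap]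
      rw [Theta_rev r M hM i j]
      ring
    · rintro ⟨i, j⟩ _ h h'
      simp only [Prod.swap_prod_mk, Prod.mk.injEq] at h'
      obtain ⟨rfl, _⟩ := h'
      simp [Theta_diag r M hM] at h
    · simp
    · simp
  rw [Fintype.sum_prod_type] at s0
  calc _ = ∑ i : Fin r, (x ⟨i.val, by omega⟩ * x ⟨2 * r - 1 - i.val, by omega⟩ +
        ∑ j : Fin r, x ⟨i.val, by omega⟩ * (M i.rev j * x ⟨j.val, by omega⟩)) := by
        refine Finset.sum_congr rfl fun i _ => ?_
        rw [dif_pos i.isLt, dif_neg (by have := i.isLt; omega), e i, add_zero, mul_add,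
          Finset.mul_sum]
    _ = _ := by rw [Finset.sum_add_distrib, s0, add_zero]

end Helpers

/-- For `M ∈ Θ(r,R)`, the matrix `U(M) = [[1,0],[M,1]]` lies in `O(2r,R)` and is a
product of `r(r−1)/2` elementary orthogonal transvections, each of the form
`T_{−i,j}(ξ)` with `1 ≤ i < j ≤ r`. -/
theorem Umat_mem_O_and_product_of_transvections
    (R : Type*) [CommRing R] (r : ℕ) (hr : 2 ≤ r)
    (M : Matrix (Fin r) (Fin r) R) (hM : M ∈ Theta r R) :
    Umat r M ∈ OE r R ∧
    ∃ L : List (Matrix (Fin (2 * r)) (Fin (2 * r)) R),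
      L.length = r * (r - 1) / 2 ∧
      (∀ g ∈ L, IsElemE r g ∧ ∃ (i j : Fin r) (ξ : R), i < j ∧
        g = TE r (negE r ⟨i.val, by omega⟩) ⟨j.val, by omega⟩ ξ) ∧
      Umat r M = L.prod := by
  refine ⟨⟨Umat_isUnit r M, Umat_quad r M hM⟩, ?_⟩
  let S := (Finset.univ : Finset (Fin r × Fin r)).filter (fun p => p.1 < p.2)
  refine ⟨S.toList.map fun p =>
    TE r (negE r ⟨p.1.val, by omega⟩) ⟨p.2.val, by omega⟩ (M p.1.rev p.2), ?_, ?_, ?_⟩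
  · rw [List.length_map, Finset.length_toList]
    exact card_pairs r
  · intro g hg
    rw [List.mem_map] at hg
    obtain ⟨⟨i, j⟩, hp, rfl⟩ := hg
    have hij : i < j := by simpa [S] using hp
    refine ⟨⟨_, _, _, ?_, ?_, rfl⟩, i, j, _, hij, rfl⟩
    · simp only [negE, ne_eq, Fin.ext_iff]
      omega
    · simp only [negE, ne_eq, Fin.ext_iff]
      have : i.val < j.val := hij
      omega
  · simp only [TE_eq]
    rw [← Umat_list_sum r (fun p : Fin r × Fin r =>
      M p.1.rev p.2 • Matrix.single p.1.rev p.2 (1 : R)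
        - M p.1.rev p.2 • Matrix.single p.2.rev p.1 1), Finset.sum_map_toList]
    exact congrArg (Umat r) (Theta_sum r M hM)
end

section
/- Let B be a commutative ring, let P_1,…,P_m be distinct maximal ideals of B, let A = B[y], r ≥ 3, and let b = b(y) = (b_1,…,b_{−1})^t ∈ IUm_{2r}(A) be a column such that b_{−2} is a monic polynomial in y. Then there exists a column b^{(1)} ∈ EO(2r,A)^{≤ ⌈(r−1)/2⌉ + 2} · b such that b^{(1)}_{−2} is monic in y and the intersection (⟨b^{(1)}_1,…,b^{(1)}_{r−1}⟩ ∩ B) is not contained in the union P_1 ∪ … ∪ P_m, i.e. (⟨b^{(1)}_1,…,b^{(1)}_{r−1}⟩ ∩ B) \ (P_1 ∪ … ∪ P_m) ≠ ∅. -/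
open Matrix

section PrepHelpers

open Polynomial

theorem prep_TE_mulVec {R : Type*} [CommRing R] (r : ℕ) (i j : Fin (2 * r)) (ξ : R)
    (v : Fin (2 * r) → R) (k : Fin (2 * r)) :
    (TE r i j ξ).mulVec v k =
      v k + (if k = i then ξ * v j else 0)
        - (if k = negE r j then ξ * v (negE r i) else 0) := by
  unfold TE
  rw [Matrix.sub_mulVec, Matrix.add_mulVec, Matrix.one_mulVec, Matrix.smul_mulVec,
    Matrix.smul_mulVec]
  simp only [Pi.sub_apply, Pi.add_apply, Pi.smul_apply, smul_eq_mul]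
  congr 2
  · by_cases h : k = i <;> simp [h, Matrix.single_mulVec, Function.update]
  · by_cases h : k = negE r j <;> simp [h, Matrix.single_mulVec, Function.update]

/-- maximal ideals of `B[y]` over one of the `P i` containing `f` -/
def prepSet {B : Type*} [CommRing B] {m : ℕ} (P : Fin m → Ideal B) (f : Polynomial B) :
    Set (Ideal (Polynomial B)) :=
  {Q | Q.IsPrime ∧ f ∈ Q ∧ ∃ i, Q.comap (C : B →+* Polynomial B) = P i}

theorem prep_descend {B : Type*} [CommRing B] {f : Polynomial B} {p : Ideal B}
    {Q : Ideal (Polynomial B)} (hQ : Q.IsPrime) (hfQ : f ∈ Q)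
    (hp : Q.comap (C : B →+* Polynomial B) = p) :
    ∃ Q' : Ideal (Polynomial B ⧸ Ideal.span {f}), Q'.IsPrime ∧
      Q'.comap (algebraMap B (Polynomial B ⧸ Ideal.span {f})) = p ∧
      Q = Q'.comap (Ideal.Quotient.mk (Ideal.span {f})) := by
  have hle : Ideal.span {f} ≤ Q := by
    rw [Ideal.span_le]; simpa using hfQ
  have hcm : (Q.map (Ideal.Quotient.mk (Ideal.span {f}))).comap
      (Ideal.Quotient.mk (Ideal.span {f})) = Q := by
    rw [Ideal.comap_map_of_surjective' _ Ideal.Quotient.mk_surjective, Ideal.mk_ker]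
    exact sup_eq_left.2 hle
  refine ⟨Q.map (Ideal.Quotient.mk (Ideal.span {f})), ?_, ?_, hcm.symm⟩
  · exact Ideal.map_isPrime_of_surjective Ideal.Quotient.mk_surjective (by rwa [Ideal.mk_ker])
  · have : algebraMap B (Polynomial B ⧸ Ideal.span {f}) =
        (Ideal.Quotient.mk (Ideal.span {f})).comp (C : B →+* Polynomial B) := rfl
    rw [this, ← Ideal.comap_comap, hcm, hp]

theorem prepSet_finite {B : Type*} [CommRing B] {m : ℕ} (P : Fin m → Ideal B)
    {f : Polynomial B} (hf : f.Monic) : (prepSet P f).Finite := by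
  have := hf.finite_quotient
  have hfin : (⋃ i, (fun Q' : Ideal (Polynomial B ⧸ Ideal.span {f}) =>
      Q'.comap (Ideal.Quotient.mk (Ideal.span {f}))) ''
        ((P i).primesOver (Polynomial B ⧸ Ideal.span {f}))).Finite :=
    Set.finite_iUnion fun i => (Algebra.QuasiFinite.finite_primesOver (P i)).image _
  refine hfin.subset ?_
  rintro Q ⟨hQ, hfQ, i, hi⟩
  obtain ⟨Q', h1, h2, h3⟩ := prep_descend hQ hfQ hi
  exact Set.mem_iUnion.2 ⟨i, Q', ⟨h1, ⟨h2.symm⟩⟩, h3.symm⟩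

theorem prepSet_maximal {B : Type*} [CommRing B] {m : ℕ} (P : Fin m → Ideal B)
    (hP : ∀ i, (P i).IsMaximal) {f : Polynomial B} (hf : f.Monic)
    (Q : Ideal (Polynomial B)) (hQ : Q ∈ prepSet P f) : Q.IsMaximal := by
  have := hf.finite_quotient
  obtain ⟨hQ, hfQ, i, hi⟩ := hQ
  obtain ⟨Q', h1, h2, h3⟩ := prep_descend hQ hfQ hi
  have : Q'.IsMaximal :=
    Ideal.isMaximal_of_isIntegral_of_isMaximal_comap (R := B) Q' (h2 ▸ hP i)
  rw [h3]
  exact Ideal.comap_isMaximal_of_surjective _ Ideal.Quotient.mk_surjective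

/-- Chinese remainder choice of a 0/1 pattern. -/
theorem prep_choose {A : Type*} [CommRing A] (S : Set (Ideal A)) (hS : S.Finite)
    (hmax : ∀ M ∈ S, M.IsMaximal) (q : Ideal A → Prop) :
    ∃ ξ : A, ∀ M ∈ S, (q M → ξ - 1 ∈ M) ∧ (¬ q M → ξ ∈ M) := by
  classical
  have := hS.to_subtype
  obtain ⟨ξ, hξ⟩ := Ideal.exists_forall_sub_mem_ideal (I := fun M : S => (M : Ideal A))
    (fun M N hMN => by
      have h1 := hmax M M.2
      have h2 := hmax N N.2
      exact Ideal.isCoprime_of_isMaximal (fun h => hMN (Subtype.ext h)))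
    (fun M => if q M then 1 else 0)
  refine ⟨ξ, fun M hM => ⟨fun h => ?_, fun h => ?_⟩⟩
  · simpa [h] using hξ ⟨M, hM⟩
  · simpa [h] using hξ ⟨M, hM⟩

theorem prep_avoid {B : Type*} [CommRing B] {m : ℕ} (P : Fin m → Ideal B)
    (hP : ∀ i, (P i).IsMaximal) {f : Polynomial B} (hf : f.Monic)
    (I : Ideal (Polynomial B)) (hfI : f ∈ I) (hI : ∀ Q ∈ prepSet P f, ¬ I ≤ Q) :
    ∃ x : B, C x ∈ I ∧ ∀ i, x ∉ P i := by
  by_contra! hcon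
  have hsub : ((I.comap (C : B →+* Polynomial B) : Ideal B) : Set B) ⊆
      ⋃ i ∈ (↑(Finset.univ : Finset (Fin m)) : Set (Fin m)), P i := by
    intro x hx
    obtain ⟨i, hi⟩ := hcon x hx
    simp only [Set.mem_iUnion]
    exact ⟨i, by simp, hi⟩
  obtain ⟨i0, -⟩ := hcon 0 (by simp)
  obtain ⟨i, -, hi⟩ := (Ideal.subset_union_prime i0 i0
    (fun i _ _ _ => (hP i).isPrime)).1 hsub
  have := hf.finite_quotient
  have hprime := (hP i).isPrime
  have hle : Ideal.span {f} ≤ I := by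
    rw [Ideal.span_le]; simpa using hfI
  have hcm : (I.map (Ideal.Quotient.mk (Ideal.span {f}))).comap
      (Ideal.Quotient.mk (Ideal.span {f})) = I := by
    rw [Ideal.comap_map_of_surjective' _ Ideal.Quotient.mk_surjective, Ideal.mk_ker]
    exact sup_eq_left.2 hle
  have halg : algebraMap B (Polynomial B ⧸ Ideal.span {f}) =
        (Ideal.Quotient.mk (Ideal.span {f})).comp (C : B →+* Polynomial B) := rfl
  obtain ⟨Q', hQI, hQ', hQP⟩ := Ideal.exists_ideal_over_prime_of_isIntegral (P i)
    (I.map (Ideal.Quotient.mk (Ideal.span {f})))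
    (by rw [halg, ← Ideal.comap_comap, hcm]; exact hi)
  have hIQ : I ≤ Q'.comap (Ideal.Quotient.mk (Ideal.span {f})) := Ideal.map_le_iff_le_comap.1 hQI
  refine hI (Q'.comap (Ideal.Quotient.mk (Ideal.span {f}))) ⟨inferInstance, hIQ hfI, i, ?_⟩ hIQ
  rw [Ideal.comap_comap, ← halg, hQP]

theorem prep_monic {B : Type*} [CommRing B] (p g : Polynomial B) (hg : g.Monic) :
    ∃ N : ℕ, (p + g * X ^ N * g).Monic := by
  nontriviality B
  refine ⟨p.natDegree + 1, ?_⟩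
  have hm : (g * X ^ (p.natDegree + 1) * g).Monic := (hg.mul (monic_X_pow _)).mul hg
  rw [add_comm]
  refine hm.add_of_left ?_
  refine degree_lt_degree ?_
  rw [(hg.mul (monic_X_pow _)).natDegree_mul hg, hg.natDegree_mul (monic_X_pow _), natDegree_X_pow]
  omega

theorem prep_mem {A : Type*} [CommRing A] (M : Ideal A) {a x ξ : A} (ha : a ∈ M)
    (hξ : ξ - 1 ∈ M) (h : a + ξ * x ∈ M) : x ∈ M := by
  have : x = (a + ξ * x) - a - (ξ - 1) * x := by ring
  rw [this]
  exact M.sub_mem (M.sub_mem h ha) (M.mul_mem_right _ hξ)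

theorem prep_mem' {A : Type*} [CommRing A] (M : Ideal A) {a x ξ : A} (ha : a ∈ M)
    (hξ : ξ - 1 ∈ M) (h : a - ξ * x ∈ M) : x ∈ M := by
  have : x = a - (a - ξ * x) - (ξ - 1) * x := by ring
  rw [this]
  exact M.sub_mem (M.sub_mem ha h) (M.mul_mem_right _ hξ)

/-- if `ξ ∈ M`, the transvection does nothing modulo `M` -/
theorem prep_TE_triv {A : Type*} [CommRing A] (r : ℕ) (i j : Fin (2 * r)) (ξ : A)
    (v : Fin (2 * r) → A) (M : Ideal A) (hξ : ξ ∈ M) (k : Fin (2 * r)) (hk : v k ∉ M) :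
    (TE r i j ξ).mulVec v k ∉ M := by
  intro h
  rw [prep_TE_mulVec] at h
  apply hk
  have h1 : (if k = i then ξ * v j else 0) ∈ M := by
    split_ifs
    · exact M.mul_mem_right _ hξ
    · exact M.zero_mem
  have h2 : (if k = negE r j then ξ * v (negE r i) else 0) ∈ M := by
    split_ifs
    · exact M.mul_mem_right _ hξ
    · exact M.zero_mem
  have := M.sub_mem (M.add_mem h h2) h1
  simpa using this

theorem prep_TE_other {A : Type*} [CommRing A] (r : ℕ) (i j : Fin (2 * r)) (ξ : A)
    (v : Fin (2 * r) → A) (k : Fin (2 * r)) (h1 : k.val ≠ i.val)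
    (h2 : k.val ≠ 2 * r - 1 - j.val) :
    (TE r i j ξ).mulVec v k = v k := by
  rw [prep_TE_mulVec, if_neg, if_neg]
  · simp
  · intro h; apply h2; rw [h]; rfl
  · intro h; apply h1; rw [h]

theorem prep_TE_fst {A : Type*} [CommRing A] (r : ℕ) (i j : Fin (2 * r)) (ξ : A)
    (v : Fin (2 * r) → A) (h2 : i.val ≠ 2 * r - 1 - j.val) :
    (TE r i j ξ).mulVec v i = v i + ξ * v j := by
  rw [prep_TE_mulVec, if_pos rfl, if_neg]
  · simp
  · intro h; apply h2; exact congrArg Fin.val h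

theorem prep_TE_snd {A : Type*} [CommRing A] (r : ℕ) (i j k l : Fin (2 * r)) (ξ : A)
    (v : Fin (2 * r) → A) (hk : k.val = 2 * r - 1 - j.val) (hl : l.val = 2 * r - 1 - i.val)
    (h2 : i.val ≠ k.val) :
    (TE r i j ξ).mulVec v k = v k - ξ * v l := by
  have e1 : k = negE r j := Fin.ext hk
  have e2 : l = negE r i := Fin.ext hl
  rw [prep_TE_mulVec, if_neg, if_pos e1, e2]
  · simp
  · intro h; apply h2; rw [h]

/-- `w` is obtained from `v` by at most `N` transvections -/
def PrepReach {A : Type*} [CommRing A] (r N : ℕ) (v w : Fin (2 * r) → A) : Prop :=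
  ∃ E ∈ EOE r N A, w = E.mulVec v

theorem prepReach_refl {A : Type*} [CommRing A] (r N : ℕ) (v : Fin (2 * r) → A) :
    PrepReach r N v v := ⟨1, ⟨[], by simp, by simp, by simp⟩, by simp⟩

theorem prepReach_trans {A : Type*} [CommRing A] {r N N' : ℕ} {v w u : Fin (2 * r) → A}
    (h : PrepReach r N v w) (h' : PrepReach r N' w u) : PrepReach r (N' + N) v u := by
  obtain ⟨E, ⟨L, hL, hLe, rfl⟩, rfl⟩ := h
  obtain ⟨E', ⟨L', hL', hLe', rfl⟩, rfl⟩ := h'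
  refine ⟨L'.prod * L.prod, ⟨L' ++ L, ?_, ?_, by simp⟩, by simp [Matrix.mulVec_mulVec]⟩
  · simp only [List.length_append]; omega
  · intro x hx
    rcases List.mem_append.1 hx with hx | hx
    · exact hLe' x hx
    · exact hLe x hx

theorem prepReach_one {A : Type*} [CommRing A] (r : ℕ) (i j : Fin (2 * r)) (ξ : A)
    (v : Fin (2 * r) → A) (h1 : i.val ≠ j.val) (h2 : i.val ≠ 2 * r - 1 - j.val) :
    PrepReach r 1 v ((TE r i j ξ).mulVec v) := by
  refine ⟨_, ⟨[TE r i j ξ], by simp, ?_, by simp⟩, rfl⟩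
  intro x hx
  rw [List.mem_singleton] at hx
  exact ⟨i, j, ξ, fun h => h1 (congrArg _ h), fun h => h2 (congrArg Fin.val h), hx⟩

theorem prep_pairs {A : Type*} [CommRing A] (S : Set (Ideal A)) (hS : S.Finite)
    (hmax : ∀ M ∈ S, M.IsMaximal) (r : ℕ) (hr : 3 ≤ r)
    (t : Fin (2 * r)) (ht : t.val = 2 * r - 2) (n : ℕ) :
    ∀ (c : ℕ) (v : Fin (2 * r) → A), c ≤ r + 2 * n → c ≤ 2 * r - 3 →
      (∀ M ∈ S, ∃ k : Fin (2 * r), 1 ≤ k.val ∧ (k.val ≤ c ∨ k.val = 2 * r - 2) ∧ v k ∉ M) →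
      ∃ w, PrepReach r n v w ∧ w ⟨0, by omega⟩ = v ⟨0, by omega⟩ ∧
        w t = v t ∧
        ∀ M ∈ S, ∃ k : Fin (2 * r), 1 ≤ k.val ∧ (k.val ≤ r ∨ k.val = 2 * r - 2) ∧ w k ∉ M := by
  induction n with
  | zero =>
    intro c v hc hc' h
    refine ⟨v, prepReach_refl _ _ _, rfl, rfl, fun M hM => ?_⟩
    obtain ⟨k, h1, h2, h3⟩ := h M hM
    exact ⟨k, h1, by omega, h3⟩
  | succ n ih =>
    intro c v hc hc' h
    by_cases hcr : c ≤ r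
    · refine ⟨v, prepReach_refl _ _ _, rfl, rfl, fun M hM => ?_⟩
      obtain ⟨k, h1, h2, h3⟩ := h M hM
      exact ⟨k, h1, by omega, h3⟩
    push Not at hcr
    obtain ⟨ξ, hξ⟩ := prep_choose S hS hmax (fun M => ∀ k : Fin (2 * r), 1 ≤ k.val →
      (k.val ≤ c - 2 ∨ k.val = 2 * r - 2) → v k ∈ M)
    set i : Fin (2 * r) := ⟨2 * r - 1 - c, by omega⟩ with hi
    set j : Fin (2 * r) := ⟨c - 1, by omega⟩ with hj
    obtain ⟨w, hw1, hw2, hw3, hw4⟩ := ih (c - 2) ((TE r i j ξ).mulVec v) (by omega) (by omega) (by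
      intro M hM
      obtain ⟨hq1, hq2⟩ := hξ M hM
      by_cases hq : ∀ k : Fin (2 * r), 1 ≤ k.val →
        (k.val ≤ c - 2 ∨ k.val = 2 * r - 2) → v k ∈ M
      · have hx := hq1 hq
        obtain ⟨k, h1, h2, h3⟩ := h M hM
        have hk : k.val = c - 1 ∨ k.val = c := by
          by_contra hne
          exact h3 (hq k h1 (by omega))
        rcases hk with hk | hk
        · refine ⟨i, by simp only [hi]; omega, by simp only [hi]; omega, fun hcon => h3 ?_⟩
          rw [prep_TE_fst _ _ _ _ _ (by simp only [hi, hj]; omega)] at hcon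
          have hkj : k = j := Fin.ext hk
          rw [hkj]
          exact prep_mem M (hq i (by simp only [hi]; omega) (by simp only [hi]; omega)) hx hcon
        · refine ⟨⟨2 * r - c, by omega⟩, by simp only; omega, by simp only; omega,
            fun hcon => h3 ?_⟩
          rw [prep_TE_snd r i j _ k _ _ (by simp only [hj]; omega) (by simp only [hi]; omega)
            (by simp only [hi]; omega)] at hcon
          exact prep_mem' M (hq _ (by simp only; omega) (by simp only; omega)) hx hcon
      · have hx := hq2 hq
        push Not at hq
        obtain ⟨k, h1, h2, h3⟩ := hq
        exact ⟨k, h1, h2, prep_TE_triv _ _ _ _ _ _ hx _ h3⟩)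
    refine ⟨w, prepReach_trans (prepReach_one r i j ξ v ?_ ?_) hw1, ?_, ?_, hw4⟩
    · simp only [hi, hj]; omega
    · simp only [hi, hj]; omega
    · rw [hw2]; apply prep_TE_other <;> simp only [hi, hj] <;> omega
    · rw [hw3]; apply prep_TE_other <;> simp only [hi, hj] <;> omega

theorem prep_last {A : Type*} [CommRing A] (S : Set (Ideal A)) (hS : S.Finite)
    (hmax : ∀ M ∈ S, M.IsMaximal) (r : ℕ) (hr : 3 ≤ r)
    (t : Fin (2 * r)) (ht : t.val = 2 * r - 2) (v : Fin (2 * r) → A)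
    (h : ∀ M ∈ S, ∃ k : Fin (2 * r), 1 ≤ k.val ∧ (k.val ≤ r ∨ k.val = 2 * r - 2) ∧ v k ∉ M) :
    ∃ w, PrepReach r 2 v w ∧ w ⟨0, by omega⟩ = v ⟨0, by omega⟩ ∧
      w t = v t ∧
      ∀ M ∈ S, ∃ k : Fin (2 * r), k.val < r - 1 ∧ w k ∉ M := by
  set one : Fin (2 * r) := ⟨1, by omega⟩ with hone
  set p : Fin (2 * r) := ⟨r - 1, by omega⟩ with hp
  set q : Fin (2 * r) := ⟨r, by omega⟩ with hq
  obtain ⟨ξ, hξ⟩ := prep_choose S hS hmax (fun M => (∀ k : Fin (2 * r), 1 ≤ k.val →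
      k.val < r - 1 → v k ∈ M) ∧ (v p ∉ M ∨ v q ∈ M))
  set u := (TE r one p ξ).mulVec v with hu
  have hstep : ∀ M ∈ S, ∃ k : Fin (2 * r), 1 ≤ k.val ∧ (k.val < r - 1 ∨ k = q) ∧ u k ∉ M := by
    intro M hM
    obtain ⟨hq1, hq2⟩ := hξ M hM
    by_cases hall : ∀ k : Fin (2 * r), 1 ≤ k.val → k.val < r - 1 → v k ∈ M
    · by_cases hvp : v p ∈ M
      · by_cases hvq : v q ∈ M
        · have hx := hq1 ⟨hall, Or.inr hvq⟩
          obtain ⟨k, h1, h2, h3⟩ := h M hM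
          have hkt : k = t := by
            by_contra hne
            have hne' : k.val ≠ 2 * r - 2 := fun e => hne (Fin.ext (e.trans ht.symm))
            apply h3
            rcases lt_trichotomy k.val (r - 1) with hk | hk | hk
            · exact hall k h1 hk
            · rwa [show k = p from Fin.ext hk]
            · rwa [show k = q from Fin.ext (by simp only [hq]; omega)]
          refine ⟨q, by simp only [hq]; omega, Or.inr rfl, fun hcon => h3 ?_⟩
          rw [hu, prep_TE_snd r one p q t _ _ (by simp only [hp, hq]; omega)
            (by simp only [hone]; omega) (by simp only [hone, hq]; omega)] at hcon
          rw [hkt]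
          exact prep_mem' M hvq hx hcon
        · have hx := hq2 (fun hh => hh.2.elim (fun a => a hvp) hvq)
          exact ⟨q, by simp only [hq]; omega, Or.inr rfl, prep_TE_triv _ _ _ _ _ _ hx _ hvq⟩
      · have hx := hq1 ⟨hall, Or.inl hvp⟩
        refine ⟨one, by simp only [hone]; omega, Or.inl (by simp only [hone]; omega),
          fun hcon => hvp ?_⟩
        rw [hu, prep_TE_fst _ _ _ _ _ (by simp only [hone, hp]; omega)] at hcon
        exact prep_mem M (hall one (by simp only [hone]; omega) (by simp only [hone]; omega)) hx hcon
    · have hx := hq2 (fun hh => hall hh.1)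
      push Not at hall
      obtain ⟨k, h1, h2, h3⟩ := hall
      exact ⟨k, h1, Or.inl h2, prep_TE_triv _ _ _ _ _ _ hx _ h3⟩
  obtain ⟨η, hη⟩ := prep_choose S hS hmax (fun M => ∀ k : Fin (2 * r), 1 ≤ k.val →
      k.val < r - 1 → u k ∈ M)
  refine ⟨(TE r one q η).mulVec u, prepReach_trans (N := 1) (N' := 1) (prepReach_one r one p ξ v ?_ ?_)
    (prepReach_one r one q η u ?_ ?_), ?_, ?_, ?_⟩
  · simp only [hone, hp]; omega
  · simp only [hone, hp]; omega
  · simp only [hone, hq]; omega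
  · simp only [hone, hq]; omega
  · rw [prep_TE_other, hu, prep_TE_other] <;> simp only [hone, hp, hq] <;> omega
  · rw [prep_TE_other, hu, prep_TE_other] <;> simp only [hone, hp, hq] <;> omega
  · intro M hM
    obtain ⟨hq1, hq2⟩ := hη M hM
    by_cases hall : ∀ k : Fin (2 * r), 1 ≤ k.val → k.val < r - 1 → u k ∈ M
    · have hx := hq1 hall
      obtain ⟨k, h1, h2, h3⟩ := hstep M hM
      have hkq : k = q := h2.resolve_left (fun h2 => h3 (hall k h1 h2))
      refine ⟨one, by simp only [hone]; omega, fun hcon => h3 ?_⟩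
      rw [prep_TE_fst _ _ _ _ _ (by simp only [hone, hq]; omega)] at hcon
      rw [hkq]
      exact prep_mem M (hall one (by simp only [hone]; omega) (by simp only [hone]; omega)) hx hcon
    · have hx := hq2 hall
      push Not at hall
      obtain ⟨k, h1, h2, h3⟩ := hall
      exact ⟨k, h2, prep_TE_triv _ _ _ _ _ _ hx _ h3⟩

end PrepHelpers

/-- Preparation step: given distinct maximal ideals `P_1,…,P_m` of `B` and
`b ∈ IUm_{2r}(B[y])` with `b_{−2}` monic, at most `⌈(r−1)/2⌉ + 2` elementary orthogonal
transvections produce a column `b⁽¹⁾` with `b⁽¹⁾_{−2}` monic and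
`(⟨b⁽¹⁾_1,…,b⁽¹⁾_{r−1}⟩ ∩ B) ⊄ P_1 ∪ … ∪ P_m`. -/
theorem even_prepare_shift
    (B : Type*) [CommRing B] (m : ℕ) (P : Fin m → Ideal B)
    (hP : ∀ i, (P i).IsMaximal) (hPdist : ∀ i j, i ≠ j → P i ≠ P j)
    (r : ℕ) (hr : 3 ≤ r)
    (b : Fin (2 * r) → Polynomial B) (hb : b ∈ IUmE r (Polynomial B))
    (hmonic : (b ⟨2 * r - 2, by omega⟩).Monic) :
    ∃ E ∈ EOE r ((r - 1 + 1) / 2 + 2) (Polynomial B),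
      (E.mulVec b ⟨2 * r - 2, by omega⟩).Monic ∧
      ∃ x : B,
        Polynomial.C x ∈
          Ideal.span {p : Polynomial B | ∃ i : Fin (2 * r), i.val < r - 1 ∧ p = E.mulVec b i} ∧
        ∀ i, x ∉ P i := by
  obtain ⟨hum, -⟩ := hb
  set t : Fin (2 * r) := ⟨2 * r - 2, by omega⟩ with ht
  set z : Fin (2 * r) := ⟨0, by omega⟩ with hz
  set one : Fin (2 * r) := ⟨1, by omega⟩ with hone
  set l : Fin (2 * r) := ⟨2 * r - 1, by omega⟩ with hl
  -- step 1
  obtain ⟨ξ₀, hξ₀⟩ := prep_choose (prepSet P (b t)) (prepSet_finite P hmonic)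
    (prepSet_maximal P hP hmonic) (fun M => ∀ k : Fin (2 * r), k.val < 2 * r - 1 → b k ∈ M)
  obtain ⟨N, hN⟩ := prep_monic (b z + ξ₀ * b t) (b t) hmonic
  set ξ := ξ₀ + b t * Polynomial.X ^ N with hξ
  set v := (TE r z t ξ).mulVec b with hv
  have hvz : v z = b z + ξ * b t := prep_TE_fst _ _ _ _ _ (by simp only [hz, ht]; omega)
  have hvt : v t = b t := prep_TE_other _ _ _ _ _ _ (by simp only [hz, ht]; omega)
    (by simp only [ht]; omega)
  have hmz : (v z).Monic := by
    have : v z = b z + ξ₀ * b t + b t * Polynomial.X ^ N * b t := by rw [hvz, hξ]; ring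
    rw [this]; exact hN
  have hS := prepSet_finite P hmz
  have hSm := prepSet_maximal P hP hmz
  have hstart : ∀ M ∈ prepSet P (v z), ∃ k : Fin (2 * r),
      1 ≤ k.val ∧ (k.val ≤ 2 * r - 3 ∨ k.val = 2 * r - 2) ∧ v k ∉ M := by
    intro M hM
    have key : ∃ k : Fin (2 * r), k.val < 2 * r - 1 ∧ v k ∉ M := by
      by_cases htM : b t ∈ M
      · obtain ⟨hq1, hq2⟩ := hξ₀ M ⟨hM.1, htM, hM.2.2⟩
        have hbX : b t * Polynomial.X ^ N ∈ M := M.mul_mem_right _ htM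
        by_cases hall : ∀ k : Fin (2 * r), k.val < 2 * r - 1 → b k ∈ M
        · have hx : ξ - 1 ∈ M := by
            have := M.add_mem (hq1 hall) hbX
            rwa [show ξ₀ - 1 + b t * Polynomial.X ^ N = ξ - 1 by rw [hξ]; ring] at this
          refine ⟨one, by simp only [hone]; omega, fun hcon => ?_⟩
          rw [hv, prep_TE_snd r z t one l _ _ (by simp only [hone, ht]; omega)
            (by simp only [hl, hz]; omega) (by simp only [hz, hone]; omega)] at hcon
          have hbl := prep_mem' M (hall one (by simp only [hone]; omega)) hx hcon
          apply hM.1.ne_top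
          rw [eq_top_iff, ← hum, Ideal.span_le]
          rintro _ ⟨k, rfl⟩
          by_cases hk : k.val < 2 * r - 1
          · exact hall k hk
          · rw [show k = l from Fin.ext (by simp only [hl]; omega)]
            exact hbl
        · have hx : ξ ∈ M := M.add_mem (hq2 hall) hbX
          push Not at hall
          obtain ⟨k, h1, h2⟩ := hall
          exact ⟨k, h1, prep_TE_triv _ _ _ _ _ _ hx _ h2⟩
      · exact ⟨t, by simp only [ht]; omega, by rwa [hvt]⟩
    obtain ⟨k, h1, h2⟩ := key
    have hk0 : k.val ≠ 0 := by
      intro h0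
      apply h2
      rw [show k = z from Fin.ext h0]
      exact hM.2.1
    exact ⟨k, by omega, by omega, h2⟩
  obtain ⟨w, hw1, hw2, hw3, hw4⟩ := prep_pairs _ hS hSm r hr t rfl ((r - 2) / 2) (2 * r - 3) v
    (by omega) le_rfl hstart
  obtain ⟨u, hu1, hu2, hu3, hu4⟩ := prep_last _ hS hSm r hr t rfl w hw4
  have hreach := prepReach_trans (prepReach_trans
    (prepReach_one r z t ξ b (by simp only [hz, ht]; omega) (by simp only [hz, ht]; omega)) hw1) hu1
  have hNum : 2 + ((r - 2) / 2 + 1) = (r - 1 + 1) / 2 + 2 := by omega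
  rw [hNum] at hreach
  obtain ⟨E, hE, hEu⟩ := hreach
  refine ⟨E, hE, ?_, ?_⟩
  · rw [← hEu, hu3, hw3, hvt]; exact hmonic
  · rw [← hEu]
    refine prep_avoid P hP hmz _ (Ideal.subset_span ⟨z, by simp only [hz]; omega, ?_⟩) ?_
    · rw [hu2, hw2]
    · intro Q hQ hle
      obtain ⟨k, h1, h2⟩ := hu4 Q hQ
      exact h2 (hle (Ideal.subset_span ⟨k, h1, rfl⟩))
end
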